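/- arXiv:2302.08925 — 2 statements merged into one kernel-verified Lean document; each statement's English description precedes it below -/
import Mathlib

section
/- Let m, n ≥ 1 and let x¹ : {0,…,m} → ℝ, x² : {0,…,n} → ℝ, y : {0,…,m} → ℝ, z : {0,…,n} → ℝ with x¹_0 = x²_0 = y_0 = z_0 = 0, and Δ_α y := y_α − y_{α−1} ≠ 0, Δ_β z := z_β − z_{β−1} ≠ 0. For t ∈ ℝ assume (Δ_α y)² + (1 − e^{−2t})(Δ_α x¹)² ≥ 0 for all 1 ≤ α ≤ m and (Δ_β z)² + (1 − e^{2t})(Δ_β x²)² ≥ 0 for all 1 ≤ β ≤ n, where Δ_α x¹ = x¹_α − x¹_{α−1}, Δ_β x² = x²_β − x²_{β−1}. Define σ_{ij}(t) = ( e^{−t} x¹_i + e^{t} x²_j, y_i(t), z_j(t) ) ∈ ℝ³, where y_i(t) = ∑_{α=1}^{i} sign(Δ_α y)·√( (Δ_α y)² + (1 − e^{−2t})(Δ_α x¹)² ) and z_j(t) = ∑_{β=1}^{j} sign(Δ_β z)·√( (Δ_β z)² + (1 − e^{2t})(Δ_β x²)² ). Then for all admissible t and all 1 ≤ i ≤ m,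 1 ≤ j ≤ n: (a) σ_{ij}(t) − σ_{i−1,j}(t) − σ_{i,j−1}(t) + σ_{i−1,j−1}(t) = 0 (all faces are parallelograms); (b) ‖σ_{ij}(t) − σ_{i−1,j}(t)‖ = ‖σ_{ij}(0) − σ_{i−1,j}(0)‖; (c) ‖σ_{ij}(t) − σ_{i,j−1}(t)‖ = ‖σ_{ij}(0) − σ_{i,j−1}(0)‖; (d) ⟪σ_{ij}(t) − σ_{i−1,j}(t), σ_{ij}(t) − σ_{i,j−1}(t)⟫ = ⟪σ_{ij}(0) − σ_{i−1,j}(0), σ_{ij}(0) − σ_{i,j−1}(0)⟫. Hence each face of σ(t) is congruent to the corresponding face of σ(0). -/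
open Real Finset

/-- A vector in Euclidean space `ℝ³` given by its three coordinates. -/
noncomputable def e3 (x y z : ℝ) : EuclideanSpace ℝ (Fin 3) := !₂[x, y, z]

/-!
The net `σ t` is again a translational T-hedron: its abscissae are multiplied by the reciprocal
factors `e⁻ᵗ` and `eᵗ`, and its ordinates are chosen so that every edge, the hypotenuse of a right
triangle with one scaled leg, keeps its length. The two edge directions of a face have only the
first coordinate in common, so their inner product is a product of two abscissa increments, in which
the factors cancel.
-/

theorem e3_sub (a b c a' b' c' : ℝ) :
    e3 a b c - e3 a' b' c' = e3 (a - a') (b - b') (c - c') := by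
  ext k; fin_cases k <;> simp [e3]

theorem inner_e3 (a b c a' b' c' : ℝ) :
    inner ℝ (e3 a b c) (e3 a' b' c') = a * a' + b * b' + c * c' := by
  simp [e3, PiLp.inner_apply, Fin.sum_univ_three, mul_comm]

theorem norm_e3 (a b c : ℝ) : ‖e3 a b c‖ = √(a ^ 2 + b ^ 2 + c ^ 2) := by
  rw [norm_eq_sqrt_real_inner, inner_e3]
  simp only [sq]

section TranslationalTHedron

/-- The translational T-hedron, the discrete translation surface generated by the two planar
polylines `(x₁, y, 0)` and `(x₂, 0, z)`. Index types are arbitrary, since only differences of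
vertices matter here. -/
noncomputable def translationalTHedron {ι κ : Type*} (x₁ y : ι → ℝ) (x₂ z : κ → ℝ)
    (i : ι) (j : κ) : EuclideanSpace ℝ (Fin 3) :=
  e3 (x₁ i + x₂ j) (y i) (z j)

variable {ι κ : Type*} (x₁ y : ι → ℝ) (x₂ z : κ → ℝ)

local notation "T" => translationalTHedron x₁ y x₂ z

theorem translationalTHedron_sub_left (i i' : ι) (j : κ) :
    T i j - T i' j = e3 (x₁ i - x₁ i') (y i - y i') 0 := by
  simp only [translationalTHedron, e3_sub, add_sub_add_right_eq_sub, sub_self]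

theorem translationalTHedron_sub_right (i : ι) (j j' : κ) :
    T i j - T i j' = e3 (x₂ j - x₂ j') 0 (z j - z j') := by
  simp only [translationalTHedron, e3_sub, add_sub_add_left_eq_sub, sub_self]

theorem translationalTHedron_parallelogram (i i' : ι) (j j' : κ) :
    T i j - T i' j - T i j' + T i' j' = 0 := by
  have opposite_edges_eq : T i j - T i' j = T i j' - T i' j' := by
    simp only [translationalTHedron_sub_left]
  rw [opposite_edges_eq]
  abel

theorem norm_translationalTHedron_sub_left (i i' : ι) (j : κ) :
    ‖T i j - T i' j‖ = √((x₁ i - x₁ i') ^ 2 + (y i - y i') ^ 2) := by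
  rw [translationalTHedron_sub_left, norm_e3, zero_pow two_ne_zero, add_zero]

theorem norm_translationalTHedron_sub_right (i : ι) (j j' : κ) :
    ‖T i j - T i j'‖ = √((x₂ j - x₂ j') ^ 2 + (z j - z j') ^ 2) := by
  rw [translationalTHedron_sub_right, norm_e3, zero_pow two_ne_zero, add_zero]

theorem inner_translationalTHedron_sub_left_sub_right (i i' : ι) (j j' : κ) :
    inner ℝ (T i j - T i' j) (T i j - T i j') = (x₁ i - x₁ i') * (x₂ j - x₂ j') := by
  rw [translationalTHedron_sub_left, translationalTHedron_sub_right, inner_e3, mul_zero, zero_mul,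
    add_zero, add_zero]

end TranslationalTHedron

section CompensatingHeight

/-- The leg, with the sign of `h`, that replaces the leg `h` of a right triangle with legs `a` and
`h` when `a` is scaled by `c` and the hypotenuse is kept. Such a leg exists only if the radicand is
nonnegative; otherwise the value is `0`. -/
noncomputable def compensatingLeg (c a h : ℝ) : ℝ :=
  Real.sign h * √(h ^ 2 + (1 - c ^ 2) * a ^ 2)

theorem mul_sq_add_compensatingLeg_sq {c a h : ℝ} (h_ne : h ≠ 0)
    (h_adm : 0 ≤ h ^ 2 + (1 - c ^ 2) * a ^ 2) :
    (c * a) ^ 2 + compensatingLeg c a h ^ 2 = a ^ 2 + h ^ 2 := by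
  have sign_sq : Real.sign h ^ 2 = 1 :=
    sq_eq_one_iff.mpr (Real.sign_apply_eq_of_ne_zero h h_ne).symm
  rw [compensatingLeg, mul_pow (Real.sign h), sign_sq, sq_sqrt h_adm]
  ring

/-- The ordinates, starting at `0`, that turn the abscissae `c • x` into a polyline with the same
edge lengths as the polyline `(x, h)`, provided each `compensatingLeg` in the sum exists. -/
noncomputable def compensatingHeight (c : ℝ) (x h : ℕ → ℝ) (i : ℕ) : ℝ :=
  ∑ α ∈ Icc 1 i, compensatingLeg c (x α - x (α - 1)) (h α - h (α - 1))

theorem compensatingHeight_succ_sub (c : ℝ) (x h : ℕ → ℝ) (i : ℕ) :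
    compensatingHeight c x h (i + 1) - compensatingHeight c x h i =
      compensatingLeg c (x (i + 1) - x i) (h (i + 1) - h i) := by
  simp only [compensatingHeight]
  rw [sum_Icc_succ_top (Nat.le_add_left 1 i), add_sub_cancel_left, Nat.add_sub_cancel]

theorem edge_sq_compensatingHeight {c : ℝ} {x h : ℕ → ℝ} {i : ℕ} (h_ne : h (i + 1) ≠ h i)
    (h_adm : 0 ≤ (h (i + 1) - h i) ^ 2 + (1 - c ^ 2) * (x (i + 1) - x i) ^ 2) :
    ((c • x) (i + 1) - (c • x) i) ^ 2 +
        (compensatingHeight c x h (i + 1) - compensatingHeight c x h i) ^ 2 =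
      (x (i + 1) - x i) ^ 2 + (h (i + 1) - h i) ^ 2 := by
  rw [compensatingHeight_succ_sub, Pi.smul_apply, Pi.smul_apply, ← smul_sub, smul_eq_mul,
    mul_sq_add_compensatingLeg_sq (sub_ne_zero.mpr h_ne) h_adm]

end CompensatingHeight

section Deformation

/-- The net obtained from the translational T-hedron of `(x₁, y)` and `(x₂, z)` by scaling `x₁` by
`c⁻¹` and `x₂` by `c` and replacing the ordinates by compensating heights. The parameter `t`
of Theorem 3.2 corresponds to `c = eᵗ`. -/
noncomputable def deformation (c : ℝ) (x₁ y x₂ z : ℕ → ℝ) : ℕ → ℕ → EuclideanSpace ℝ (Fin 3) :=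
  translationalTHedron (c⁻¹ • x₁) (compensatingHeight c⁻¹ x₁ y)
    (c • x₂) (compensatingHeight c x₂ z)

variable {c : ℝ} {x₁ y x₂ z : ℕ → ℝ}

theorem norm_deformation_succ_sub_left {i : ℕ} (hy : y (i + 1) ≠ y i)
    (h_adm : 0 ≤ (y (i + 1) - y i) ^ 2 + (1 - c⁻¹ ^ 2) * (x₁ (i + 1) - x₁ i) ^ 2) (j : ℕ) :
    ‖deformation c x₁ y x₂ z (i + 1) j - deformation c x₁ y x₂ z i j‖ =
      √((x₁ (i + 1) - x₁ i) ^ 2 + (y (i + 1) - y i) ^ 2) := by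
  rw [deformation, norm_translationalTHedron_sub_left, edge_sq_compensatingHeight hy h_adm]

theorem norm_deformation_succ_sub_right {j : ℕ} (hz : z (j + 1) ≠ z j)
    (h_adm : 0 ≤ (z (j + 1) - z j) ^ 2 + (1 - c ^ 2) * (x₂ (j + 1) - x₂ j) ^ 2) (i : ℕ) :
    ‖deformation c x₁ y x₂ z i (j + 1) - deformation c x₁ y x₂ z i j‖ =
      √((x₂ (j + 1) - x₂ j) ^ 2 + (z (j + 1) - z j) ^ 2) := by
  rw [deformation, norm_translationalTHedron_sub_right, edge_sq_compensatingHeight hz h_adm]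

theorem inner_deformation_sub_left_sub_right (hc : c ≠ 0) (i i' j j' : ℕ) :
    inner ℝ (deformation c x₁ y x₂ z i j - deformation c x₁ y x₂ z i' j)
        (deformation c x₁ y x₂ z i j - deformation c x₁ y x₂ z i j') =
      (x₁ i - x₁ i') * (x₂ j - x₂ j') := by
  simp only [deformation, inner_translationalTHedron_sub_left_sub_right, Pi.smul_apply,
    smul_eq_mul]
  field_simp

end Deformation

theorem exp_two_mul_eq_sq (s : ℝ) : Real.exp (2 * s) = Real.exp s ^ 2 :=
  Real.exp_nat_mul s 2

theorem exp_neg_two_mul_eq_inv_sq (s : ℝ) : Real.exp (-2 * s) = (Real.exp s)⁻¹ ^ 2 := by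
  rw [← Real.exp_neg, ← exp_two_mul_eq_sq, neg_mul, mul_neg]

/-- **Theorem 3.2.** The explicit isometric deformation of a translational T-hedron
`σ_{ij} = (x¹_i + x²_j, y_i, z_j)`: for every admissible `t` all faces of `σ t` are
parallelograms, and each face of `σ t` is congruent to the corresponding face of `σ 0`
(the two spanning edge vectors keep their lengths and their inner product). -/
theorem stmt_5 (m n : ℕ) (hm : 1 ≤ m) (hn : 1 ≤ n)
    (x1 y x2 z : ℕ → ℝ)
    (hx10 : x1 0 = 0) (hx20 : x2 0 = 0) (hy0 : y 0 = 0) (hz0 : z 0 = 0)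
    (hyne : ∀ α ∈ Icc 1 m, y α ≠ y (α - 1))
    (hzne : ∀ β ∈ Icc 1 n, z β ≠ z (β - 1))
    (t : ℝ)
    (hty : ∀ α ∈ Icc 1 m,
      0 ≤ (y α - y (α - 1)) ^ 2 + (1 - Real.exp (-2 * t)) * (x1 α - x1 (α - 1)) ^ 2)
    (htz : ∀ β ∈ Icc 1 n,
      0 ≤ (z β - z (β - 1)) ^ 2 + (1 - Real.exp (2 * t)) * (x2 β - x2 (β - 1)) ^ 2)
    (yt zt : ℝ → ℕ → ℝ)
    (hyt : ∀ s i, yt s i = ∑ α ∈ Icc 1 i, Real.sign (y α - y (α - 1)) *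
        Real.sqrt ((y α - y (α - 1)) ^ 2 + (1 - Real.exp (-2 * s)) * (x1 α - x1 (α - 1)) ^ 2))
    (hzt : ∀ s j, zt s j = ∑ β ∈ Icc 1 j, Real.sign (z β - z (β - 1)) *
        Real.sqrt ((z β - z (β - 1)) ^ 2 + (1 - Real.exp (2 * s)) * (x2 β - x2 (β - 1)) ^ 2))
    (σ : ℝ → ℕ → ℕ → EuclideanSpace ℝ (Fin 3))
    (hσ : ∀ s i j, σ s i j = e3 (Real.exp (-s) * x1 i + Real.exp s * x2 j) (yt s i) (zt s j)) :
    ∀ i ∈ Icc 1 m, ∀ j ∈ Icc 1 n,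
      (σ t i j - σ t (i - 1) j - σ t i (j - 1) + σ t (i - 1) (j - 1) = 0) ∧
      ‖σ t i j - σ t (i - 1) j‖ = ‖σ 0 i j - σ 0 (i - 1) j‖ ∧
      ‖σ t i j - σ t i (j - 1)‖ = ‖σ 0 i j - σ 0 i (j - 1)‖ ∧
      (inner ℝ (σ t i j - σ t (i - 1) j) (σ t i j - σ t i (j - 1)) : ℝ) =
        inner ℝ (σ 0 i j - σ 0 (i - 1) j) (σ 0 i j - σ 0 i (j - 1)) := by
  have hσ_deformation (s : ℝ) : σ s = deformation (Real.exp s) x1 y x2 z := by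
    funext i j
    simp only [hσ, hyt, hzt, exp_two_mul_eq_sq, exp_neg_two_mul_eq_inv_sq, Real.exp_neg]
    rfl
  simp only [exp_two_mul_eq_sq, exp_neg_two_mul_eq_inv_sq] at hty htz
  intro i hi j hj
  obtain ⟨i, rfl⟩ := Nat.exists_eq_add_of_le' (mem_Icc.mp hi).1
  obtain ⟨j, rfl⟩ := Nat.exists_eq_add_of_le' (mem_Icc.mp hj).1
  simp only [hσ_deformation, Nat.add_sub_cancel]
  refine ⟨translationalTHedron_parallelogram .., ?_, ?_, ?_⟩
  · rw [norm_deformation_succ_sub_left (hyne _ hi) (hty _ hi),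
      norm_deformation_succ_sub_left (hyne _ hi) (by simp [sq_nonneg])]
  · rw [norm_deformation_succ_sub_right (hzne _ hj) (htz _ hj),
      norm_deformation_succ_sub_right (hzne _ hj) (by simp [sq_nonneg])]
  · rw [inner_deformation_sub_left_sub_right (Real.exp_ne_zero t),
      inner_deformation_sub_left_sub_right (Real.exp_ne_zero 0)]
end

section
/- Let m, n ≥ 1 and data g : {1,…,m} → ℝ, η : {1,…,m} → ℝ with η_α ∈ (−π/2, π/2), F : {0,…,n} → ℝ with F_0 = 0, z : {0,…,n} → ℝ with z_0 = 0 and z_β ≠ z_{β−1}. For t > −1 assume sin²η_α ≤ 1 + t for all α and (Δ_β z)² ≥ t (Δ_β F)² for all β, where Δ_β z = z_β − z_{β−1}, Δ_β F = F_β − F_{β−1}. Define φ_i(t) = 2·∑_{α=1}^{i} arcsin( sin η_α / √(1+t) ) with φ_0(t) = 0, ψ_α(t) = (φ_{α−1}(t) + φ_α(t))/2, z_j(t) = ∑_{β=1}^{j} sign(Δ_β z)·√( (Δ_β z)² − t (Δ_β F)² ), and σ_{ij}(t) = ( ∑_{α=1}^{i} g_α (−sin ψ_α(t), cos ψ_α(t))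 + √(1+t)·F_j·(cos φ_i(t), sin φ_i(t)), z_j(t) ) ∈ ℝ³. Then for every admissible t, every 1 ≤ i ≤ m and 1 ≤ j ≤ n, all six pairwise Euclidean distances among the four points σ_{i−1,j−1}(t), σ_{i,j−1}(t), σ_{ij}(t), σ_{i−1,j}(t) equal the corresponding pairwise distances at t = 0; i.e. each face of σ(t) is congruent to the corresponding face of σ(0). -/
open Real Finset

/-!
The vertical planes of two consecutive profiles of a molding surface are symmetric about a third
vertical plane, so every face is an isosceles trapezoid. By Ptolemy's theorem the square of its
diagonal is the square of its leg plus the product of its parallel sides, so the leg and the two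
parallel sides determine all six distances. In the deformation the squared leg is
`(1 + t) ΔF² + (Δz² - t ΔF²) = ΔF² + Δz²`, and the parallel sides have signed length
`g + 2 √(1 + t) F sin δ`, where `2 δ` is the angle between the profile planes; this angle is chosen
so that `√(1 + t) sin δ = sin η`. Neither quantity depends on `t`.
-/

theorem sign_mul_sqrt_sq {x a : ℝ} (hx : x ≠ 0) (ha : 0 ≤ a) : (Real.sign x * √a) ^ 2 = a := by
  rcases Real.sign_apply_eq_of_ne_zero x hx with h | h <;> simp [h, Real.sq_sqrt ha]

theorem dist_e3_sq (x y z x' y' z' : ℝ) :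
    dist (e3 x y z) (e3 x' y' z') ^ 2 = (x - x') ^ 2 + (y - y') ^ 2 + (z - z') ^ 2 := by
  simp [e3, EuclideanSpace.dist_sq_eq, Fin.sum_univ_three, Real.dist_eq]

/-- The vertices of a T-hedron in standard coordinates. The `i`-th profile lies in the vertical
plane of direction `φ i`, where its `j`-th vertex has horizontal coordinate `f j` and height `ζ j`.
All profiles share the coordinates `f`, that is, the factors `C_i` are `1`. The origin of
profile `i` is displaced from that of profile `i - 1` by `g i` along the horizontal normal to the
direction `ψ i`. -/
noncomputable def tHedron (g f ψ φ ζ : ℕ → ℝ) (i j : ℕ) : EuclideanSpace ℝ (Fin 3) :=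
  e3 ((∑ α ∈ Icc 1 i, g α * -sin (ψ α)) + f j * cos (φ i))
    ((∑ α ∈ Icc 1 i, g α * cos (ψ α)) + f j * sin (φ i)) (ζ j)

theorem dist_tHedron_profile_sq (g f ψ φ ζ : ℕ → ℝ) (i k l : ℕ) :
    dist (tHedron g f ψ φ ζ i k) (tHedron g f ψ φ ζ i l) ^ 2 =
      (f k - f l) ^ 2 + (ζ k - ζ l) ^ 2 := by
  rw [tHedron, tHedron, dist_e3_sq]
  linear_combination (f k - f l) ^ 2 * sin_sq_add_cos_sq (φ i)

-- Ptolemy's theorem for `k ≠ l`; for `k = l` the length of a parallel side.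
theorem dist_tHedron_succ_sq {g f ψ φ ζ : ℕ → ℝ} {i : ℕ}
    (hψ : ψ (i + 1) = (φ i + φ (i + 1)) / 2) (k l : ℕ) :
    dist (tHedron g f ψ φ ζ i k) (tHedron g f ψ φ ζ (i + 1) l) ^ 2 =
      (f k - f l) ^ 2 + (ζ k - ζ l) ^ 2 +
        (g (i + 1) + 2 * (f k * sin ((φ (i + 1) - φ i) / 2))) *
          (g (i + 1) + 2 * (f l * sin ((φ (i + 1) - φ i) / 2))) := by
  set δ := (φ (i + 1) - φ i) / 2 with hδ
  have hφ : φ i = ψ (i + 1) - δ := by linarith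
  have hφ_succ : φ (i + 1) = ψ (i + 1) + δ := by linarith
  rw [tHedron, tHedron, dist_e3_sq, sum_Icc_succ_top (Nat.le_add_left 1 i),
    sum_Icc_succ_top (Nat.le_add_left 1 i), hφ, hφ_succ, cos_add, sin_add, cos_sub, sin_sub]
  linear_combination (f k - f l) ^ 2 * sin_sq_add_cos_sq δ +
    ((cos δ * (f k - f l)) ^ 2 + (g (i + 1) + sin δ * (f k + f l)) ^ 2) *
      sin_sq_add_cos_sq (ψ (i + 1))

theorem dist_tHedron_eq_of_leg_eq_of_parallel_eq {g f ψ φ ζ g' f' ψ' φ' ζ' : ℕ → ℝ} {i j : ℕ}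
    (hψ : ψ (i + 1) = (φ i + φ (i + 1)) / 2) (hψ' : ψ' (i + 1) = (φ' i + φ' (i + 1)) / 2)
    (hleg : (f (j + 1) - f j) ^ 2 + (ζ (j + 1) - ζ j) ^ 2 =
      (f' (j + 1) - f' j) ^ 2 + (ζ' (j + 1) - ζ' j) ^ 2)
    (hparallel : ∀ k, k = j ∨ k = j + 1 →
      g (i + 1) + 2 * (f k * sin ((φ (i + 1) - φ i) / 2)) =
        g' (i + 1) + 2 * (f' k * sin ((φ' (i + 1) - φ' i) / 2)))
    {a b k l : ℕ} (ha : a = i ∨ a = i + 1) (hb : b = i ∨ b = i + 1)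
    (hk : k = j ∨ k = j + 1) (hl : l = j ∨ l = j + 1) :
    dist (tHedron g f ψ φ ζ a k) (tHedron g f ψ φ ζ b l) =
      dist (tHedron g' f' ψ' φ' ζ' a k) (tHedron g' f' ψ' φ' ζ' b l) := by
  have hleg_kl : (f k - f l) ^ 2 + (ζ k - ζ l) ^ 2 = (f' k - f' l) ^ 2 + (ζ' k - ζ' l) ^ 2 := by
    rcases hk with rfl | rfl <;> rcases hl with rfl | rfl <;> linarith
  rw [← sq_eq_sq₀ dist_nonneg dist_nonneg]
  rcases ha with rfl | rfl <;> rcases hb with rfl | rfl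
  · simpa only [dist_tHedron_profile_sq] using hleg_kl
  · rw [dist_tHedron_succ_sq hψ, dist_tHedron_succ_sq hψ', hleg_kl, hparallel k hk,
      hparallel l hl]
  · rw [dist_comm, dist_tHedron_succ_sq hψ, dist_comm, dist_tHedron_succ_sq hψ',
      hparallel k hk, hparallel l hl]
    linarith
  · simpa only [dist_tHedron_profile_sq] using hleg_kl

/-- The direction `φ_i(t)` of the `i`-th profile plane in the deformation of a molding surface,
with `S α` standing for `sin η_α`. -/
noncomputable def profileAngle (S : ℕ → ℝ) (t : ℝ) (i : ℕ) : ℝ :=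
  2 * ∑ α ∈ Icc 1 i, arcsin (S α / √(1 + t))

theorem sqrt_mul_sin_half_profileAngle_sub {S : ℕ → ℝ} {t : ℝ} {i : ℕ} (ht : -1 < t)
    (hS : S (i + 1) ^ 2 ≤ 1 + t) :
    √(1 + t) * sin ((profileAngle S t (i + 1) - profileAngle S t i) / 2) = S (i + 1) := by
  have hr : 0 < √(1 + t) := Real.sqrt_pos.2 (by linarith)
  have habs : |S (i + 1) / √(1 + t)| ≤ 1 := by
    rw [abs_div, abs_of_pos hr, div_le_one hr]
    exact Real.abs_le_sqrt hS
  have hangle : (profileAngle S t (i + 1) - profileAngle S t i) / 2 =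
      arcsin (S (i + 1) / √(1 + t)) := by
    rw [profileAngle, profileAngle, sum_Icc_succ_top (Nat.le_add_left 1 i)]
    ring
  rw [hangle, sin_arcsin (abs_le.1 habs).1 (abs_le.1 habs).2, mul_div_cancel₀ _ hr.ne']

/-- The height `z_j(t)` of the `j`-th vertices of the profiles in the deformation of a molding
surface. -/
noncomputable def deformedHeight (F z : ℕ → ℝ) (t : ℝ) (j : ℕ) : ℝ :=
  ∑ β ∈ Icc 1 j, Real.sign (z β - z (β - 1)) *
    √((z β - z (β - 1)) ^ 2 - t * (F β - F (β - 1)) ^ 2)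

theorem deformedHeight_succ_sub_sq {F z : ℕ → ℝ} {t : ℝ} {j : ℕ} (hz : z (j + 1) ≠ z j)
    (htz : t * (F (j + 1) - F j) ^ 2 ≤ (z (j + 1) - z j) ^ 2) :
    (deformedHeight F z t (j + 1) - deformedHeight F z t j) ^ 2 =
      (z (j + 1) - z j) ^ 2 - t * (F (j + 1) - F j) ^ 2 := by
  rw [deformedHeight, deformedHeight, sum_Icc_succ_top (Nat.le_add_left 1 j),
    add_sub_cancel_left, Nat.add_sub_cancel]
  exact sign_mul_sqrt_sq (sub_ne_zero.2 hz) (sub_nonneg.2 htz)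

theorem deformed_leg_sq {F z : ℕ → ℝ} {t : ℝ} {j : ℕ} (ht : -1 ≤ t) (hz : z (j + 1) ≠ z j)
    (htz : t * (F (j + 1) - F j) ^ 2 ≤ (z (j + 1) - z j) ^ 2) :
    (√(1 + t) * F (j + 1) - √(1 + t) * F j) ^ 2 +
        (deformedHeight F z t (j + 1) - deformedHeight F z t j) ^ 2 =
      (F (j + 1) - F j) ^ 2 + (z (j + 1) - z j) ^ 2 := by
  have hr : √(1 + t) ^ 2 = 1 + t := Real.sq_sqrt (by linarith)
  linear_combination (F (j + 1) - F j) ^ 2 * hr + deformedHeight_succ_sub_sq hz htz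

theorem stmt_6_general {g S F z ψ ψ' : ℕ → ℝ} {s t : ℝ} {i j : ℕ} (hz : z (j + 1) ≠ z j)
    (hs : -1 < s) (hsS : S (i + 1) ^ 2 ≤ 1 + s)
    (hsz : s * (F (j + 1) - F j) ^ 2 ≤ (z (j + 1) - z j) ^ 2)
    (ht : -1 < t) (htS : S (i + 1) ^ 2 ≤ 1 + t)
    (htz : t * (F (j + 1) - F j) ^ 2 ≤ (z (j + 1) - z j) ^ 2)
    (hψ : ψ (i + 1) = (profileAngle S s i + profileAngle S s (i + 1)) / 2)
    (hψ' : ψ' (i + 1) = (profileAngle S t i + profileAngle S t (i + 1)) / 2) :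
    ∀ p ∈ ({(i, j), (i + 1, j), (i + 1, j + 1), (i, j + 1)} : Set (ℕ × ℕ)),
    ∀ q ∈ ({(i, j), (i + 1, j), (i + 1, j + 1), (i, j + 1)} : Set (ℕ × ℕ)),
      dist (tHedron g (√(1 + s) * F ·) ψ (profileAngle S s) (deformedHeight F z s) p.1 p.2)
          (tHedron g (√(1 + s) * F ·) ψ (profileAngle S s) (deformedHeight F z s) q.1 q.2) =
        dist (tHedron g (√(1 + t) * F ·) ψ' (profileAngle S t) (deformedHeight F z t) p.1 p.2)
          (tHedron g (√(1 + t) * F ·) ψ' (profileAngle S t) (deformedHeight F z t) q.1 q.2) := by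
  have hleg := (deformed_leg_sq hs.le hz hsz).trans (deformed_leg_sq ht.le hz htz).symm
  have hsin := (sqrt_mul_sin_half_profileAngle_sub hs hsS).trans
    (sqrt_mul_sin_half_profileAngle_sub ht htS).symm
  have hface {p : ℕ × ℕ} (hp : p ∈ ({(i, j), (i + 1, j), (i + 1, j + 1), (i, j + 1)} : Set _)) :
      (p.1 = i ∨ p.1 = i + 1) ∧ (p.2 = j ∨ p.2 = j + 1) := by
    rcases hp with rfl | rfl | rfl | rfl <;> simp
  intro p hp q hq
  exact dist_tHedron_eq_of_leg_eq_of_parallel_eq hψ hψ' hleg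
    (fun k _ => by linear_combination 2 * F k * hsin)
    (hface hp).1 (hface hq).1 (hface hp).2 (hface hq).2

/-- **Theorem 3.4.** The explicit isometric deformation of a discrete molding surface:
for every admissible `t`, each face of `σ t` is congruent to the corresponding face of
`σ 0` (all six pairwise distances among the four vertices of a face are preserved). -/
theorem stmt_6 (m n : ℕ) (hm : 1 ≤ m) (hn : 1 ≤ n)
    (g η : ℕ → ℝ) (F z : ℕ → ℝ)
    (hηr : ∀ α ∈ Icc 1 m, η α ∈ Set.Ioo (-(π / 2)) (π / 2))
    (hF0 : F 0 = 0) (hz0 : z 0 = 0)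
    (hzne : ∀ β ∈ Icc 1 n, z β ≠ z (β - 1))
    (t : ℝ) (ht : -1 < t)
    (htη : ∀ α ∈ Icc 1 m, sin (η α) ^ 2 ≤ 1 + t)
    (htz : ∀ β ∈ Icc 1 n, t * (F β - F (β - 1)) ^ 2 ≤ (z β - z (β - 1)) ^ 2)
    (φt ψt zt : ℝ → ℕ → ℝ)
    (hφt : ∀ s i, φt s i = 2 * ∑ α ∈ Icc 1 i, arcsin (sin (η α) / Real.sqrt (1 + s)))
    (hψt : ∀ s, ∀ α ∈ Icc 1 m, ψt s α = (φt s (α - 1) + φt s α) / 2)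
    (hzt : ∀ s j, zt s j = ∑ β ∈ Icc 1 j, Real.sign (z β - z (β - 1)) *
        Real.sqrt ((z β - z (β - 1)) ^ 2 - s * (F β - F (β - 1)) ^ 2))
    (σ : ℝ → ℕ → ℕ → EuclideanSpace ℝ (Fin 3))
    (hσ : ∀ s i j, σ s i j =
        e3 ((∑ α ∈ Icc 1 i, g α * (-(sin (ψt s α)))) + Real.sqrt (1 + s) * F j * cos (φt s i))
           ((∑ α ∈ Icc 1 i, g α * cos (ψt s α)) + Real.sqrt (1 + s) * F j * sin (φt s i))
           (zt s j)) :
    ∀ i ∈ Icc 1 m, ∀ j ∈ Icc 1 n,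
      ∀ p ∈ ({(i - 1, j - 1), (i, j - 1), (i, j), (i - 1, j)} : Set (ℕ × ℕ)),
      ∀ q ∈ ({(i - 1, j - 1), (i, j - 1), (i, j), (i - 1, j)} : Set (ℕ × ℕ)),
        dist (σ t p.1 p.2) (σ t q.1 q.2) = dist (σ 0 p.1 p.2) (σ 0 q.1 q.2) := by
  obtain rfl : φt = profileAngle fun α => sin (η α) := funext₂ hφt
  obtain rfl : zt = deformedHeight F z := funext₂ hzt
  obtain rfl : σ = fun s => tHedron g (√(1 + s) * F ·) (ψt s) (profileAngle (fun α => sin (η α)) s)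
      (deformedHeight F z s) := funext₃ hσ
  intro i hi j hj
  obtain ⟨i, rfl⟩ := Nat.exists_eq_add_of_le' (mem_Icc.1 hi).1
  obtain ⟨j, rfl⟩ := Nat.exists_eq_add_of_le' (mem_Icc.1 hj).1
  exact stmt_6_general (hzne _ hj) ht (htη _ hi) (htz _ hj) neg_one_lt_zero
    (by simpa using sin_sq_le_one _) (by simpa using sq_nonneg _) (hψt t _ hi) (hψt 0 _ hi)
end
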